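/- For every n, the reduced homology H̃_i(Δ_n; ℤ) vanishes for all i > (2n−5)/3. -/

import Mathlib

/-- The chain `L` of subsets of `{1,…,n}` (encoded as `Finset (Fin n)`) with the
sentinels `S₀ = ∅` and `S_{j+1} = univ` adjoined. -/
def withSent (n : ℕ) (L : List (Finset (Fin n))) : List (Finset (Fin n)) :=
  (∅ :: L) ++ [Finset.univ]

/-- `L` is a face of the h-complex `Δₙ` of the truncated Boolean algebra: a strictly
increasing chain of proper nonempty subsets such that, with sentinels adjoined,
every consecutive pair of blocks has `max (S_i \ S_{i-1}) > min (S_{i+1} \ S_i)`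
(expressed as: some element of the lower difference exceeds some element of the
upper difference, which is equivalent since max ≥ a and min ≤ c). -/
def IsFace (n : ℕ) (L : List (Finset (Fin n))) : Prop :=
  (withSent n L).Chain' (· ⊂ ·) ∧
  ∀ i, ∀ h : i + 2 < (withSent n L).length,
    ∃ a ∈ (withSent n L).get ⟨i + 1, by omega⟩ \ (withSent n L).get ⟨i, by omega⟩,
      ∃ c ∈ (withSent n L).get ⟨i + 2, h⟩ \ (withSent n L).get ⟨i + 1, by omega⟩, c < a

/-- The faces of `Δₙ` consisting of exactly `k` subsets (dimension `k - 1`;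
`k = 0` gives the unique empty face, present for `n ≥ 1`). -/
def HFace (n k : ℕ) : Type := {L : List (Finset (Fin n)) // IsFace n L ∧ L.length = k}

open scoped Classical in
/-- The simplicial boundary of a face with `k+1` members: the alternating sum of
the faces obtained by deleting one member (deleting a member of a face of `Δₙ`
always yields a face, so the `dite` fallback is never used). -/
noncomputable def bdryElem (n k : ℕ) (L : HFace n (k + 1)) : HFace n k →₀ ℤ :=
  ∑ i : Fin (k + 1),
    if h : IsFace n (L.1.eraseIdx i) ∧ (L.1.eraseIdx i).length = k then
      Finsupp.single (⟨L.1.eraseIdx i, h⟩ : HFace n k) ((-1 : ℤ) ^ (i : ℕ))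
    else 0

/-- The boundary map of the augmented (reduced) simplicial chain complex of
`Δₙ` over `ℤ`, from chains on faces with `k+1` members to chains on faces with
`k` members. -/
noncomputable def bdry (n k : ℕ) : (HFace n (k + 1) →₀ ℤ) →ₗ[ℤ] (HFace n k →₀ ℤ) :=
  Finsupp.lsum ℤ fun L => LinearMap.toSpanSingleton ℤ _ (bdryElem n k L)

/-- The reduced simplicial homology `H̃ᵢ(Δₙ; ℤ)`: cycles on `i`-dimensional
faces (those with `i+1` members) modulo boundaries from `(i+1)`-dimensional
faces. -/
noncomputable def ReducedHomology (n i : ℕ) :=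
  LinearMap.ker (bdry n i) ⧸
    Submodule.comap (LinearMap.ker (bdry n i)).subtype (LinearMap.range (bdry n (i + 1)))

/-!
Reading a face of `Δₙ` as an ordered set partition and listing each block increasingly identifies
the faces with the permutations of `{1, …, n}`, a face being the chain of the initial segments of
its word that end at a descent. Call the chunk of positions `3m - 1, …, 3m + 2` active if both of
its middle letters are smaller than the first letter and larger than the last one (at either end of
the word, the condition on a missing letter is dropped): exchanging the middle letters then adds or
removes one descent and keeps all others. A word without an active chunk has a non-descent in each
of `⌊(n + 1) / 3⌋` disjoint chunks, so a face of large dimension has an active chunk, and toggling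
the first one is a matching. Deleting a member of a face sorts its word further, which increases the
positions of the letters in colexicographic order. This remains true of the positions up to
exchanges inside the pairs `{3m, 3m + 1}`, on which the active chunks depend, and only the toggle
keeps these fixed. So the matching is acyclic, and every cycle is a boundary.
-/

open Finset

section AcyclicMatching

variable {R A B C ι : Type*} [Ring R]

theorem mem_submodule_of_single_one_mem (W : Submodule R (B →₀ R)) (x : B →₀ R)
    (hx : ∀ b, x b ≠ 0 → Finsupp.single b 1 ∈ W) : x ∈ W := by
  rw [← Finsupp.sum_single x]
  refine W.sum_mem fun b hb => ?_
  rw [← mul_one (x b), ← Finsupp.smul_single' (x b) b 1]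
  exact W.smul_mem _ (hx b (Finsupp.mem_support_iff.1 hb))

theorem single_one_mem_range_sup_supported [Finite B] [Preorder ι] (f : (A →₀ R) →ₗ[R] (B →₀ R))
    (φ : B → ι) (D : Set B)
    (h : ∀ b ∉ D, ∃ a, IsUnit (f (Finsupp.single a 1) b) ∧
      ∀ b' ≠ b, f (Finsupp.single a 1) b' ≠ 0 → b' ∈ D ∨ φ b < φ b') (b : B) :
    Finsupp.single b 1 ∈ LinearMap.range f ⊔ Finsupp.supported R R D := by
  have wf : WellFounded fun b' b => φ b < φ b' :=
    have : IsTrans B fun b' b => φ b < φ b' := ⟨fun _ _ _ h h' => h'.trans h⟩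
    have : Std.Irrefl fun b' b : B => φ b < φ b' := ⟨fun _ => lt_irrefl _⟩
    Finite.wellFounded_of_trans_of_irrefl _
  induction b using wf.induction with
  | _ b ih =>
    by_cases hb : b ∈ D
    · exact Submodule.mem_sup_right (Finsupp.single_mem_supported R 1 hb)
    obtain ⟨a, ⟨u, hu⟩, ha⟩ := h b hb
    set x := f (Finsupp.single a 1)
    have hrest : (↑u⁻¹ : R) • x - Finsupp.single b 1 ∈
        LinearMap.range f ⊔ Finsupp.supported R R D := by
      refine mem_submodule_of_single_one_mem _ _ fun b' hb' => ?_
      rcases eq_or_ne b' b with rfl | hne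
      · simp [← hu] at hb'
      have hxb' : x b' ≠ 0 := fun h0 => hb' (by simp [h0, Finsupp.single_eq_of_ne hne])
      rcases ha b' hne hxb' with hD | hlt
      · exact Submodule.mem_sup_right (Finsupp.single_mem_supported R 1 hD)
      · exact ih b' hlt
    have hx : (↑u⁻¹ : R) • x ∈ LinearMap.range f ⊔ Finsupp.supported R R D :=
      Submodule.mem_sup_left (Submodule.smul_mem _ _ (LinearMap.mem_range_self _ _))
    simpa using sub_mem hx hrest

theorem eq_zero_of_mem_supported [Preorder ι] (g : (B →₀ R) →ₗ[R] (C →₀ R)) (φ : B → ι)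
    (D : Set B)
    (h : ∀ b ∈ D, ∃ c, IsUnit (g (Finsupp.single b 1) c) ∧
      ∀ b' ∈ D, b' ≠ b → g (Finsupp.single b' 1) c ≠ 0 → φ b' < φ b)
    {y : B →₀ R} (hy : y ∈ Finsupp.supported R R D) (hgy : g y = 0) : y = 0 := by
  by_contra hne
  obtain ⟨b, hby, hmin⟩ := y.support.exists_minimalFor φ (Finsupp.support_nonempty_iff.2 hne)
  obtain ⟨c, hunit, hc⟩ := h b (hy hby)
  have hcoeff : g y c = y b * g (Finsupp.single b 1) c := by
    conv_lhs => rw [← Finsupp.sum_single y, Finsupp.sum, map_sum, Finsupp.finsetSum_apply]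
    have hterm (b' : B) : g (Finsupp.single b' (y b')) c = y b' * g (Finsupp.single b' 1) c := by
      rw [← smul_eq_mul, ← Finsupp.smul_apply, ← map_smul, Finsupp.smul_single_one]
    simp only [hterm]
    refine Finset.sum_eq_single_of_mem b hby fun b' hb' hb'b => ?_
    by_contra hne0
    have hlt := hc b' (hy hb') hb'b (right_ne_zero_of_mul hne0)
    exact hlt.not_ge (hmin hb' hlt.le)
  rw [hgy, Finsupp.zero_apply, eq_comm, hunit.mul_left_eq_zero] at hcoeff
  exact Finsupp.mem_support_iff.1 hby hcoeff

theorem ker_le_range_of_acyclic_matching [Finite B] [Preorder ι] (f : (A →₀ R) →ₗ[R] (B →₀ R))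
    (g : (B →₀ R) →ₗ[R] (C →₀ R)) (hgf : g ∘ₗ f = 0) (φ : B → ι) (D : Set B)
    (hup : ∀ b ∉ D, ∃ a, IsUnit (f (Finsupp.single a 1) b) ∧
      ∀ b' ≠ b, f (Finsupp.single a 1) b' ≠ 0 → b' ∈ D ∨ φ b < φ b')
    (hdown : ∀ b ∈ D, ∃ c, IsUnit (g (Finsupp.single b 1) c) ∧
      ∀ b' ∈ D, b' ≠ b → g (Finsupp.single b' 1) c ≠ 0 → φ b' < φ b) :
    LinearMap.ker g ≤ LinearMap.range f := by
  intro z hz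
  have hz' : z ∈ LinearMap.range f ⊔ Finsupp.supported R R D :=
    mem_submodule_of_single_one_mem _ z fun b _ =>
      single_one_mem_range_sup_supported f φ D hup b
  obtain ⟨-, ⟨w, rfl⟩, y, hy, rfl⟩ := Submodule.mem_sup.1 hz'
  have hgy : g y = 0 := by
    simpa [← LinearMap.comp_apply, hgf] using hz
  rw [eq_zero_of_mem_supported g φ D hdown hy hgy, add_zero]
  exact LinearMap.mem_range_self f w

end AcyclicMatching

theorem sum_sum_eq_zero_of_succ_eq_neg_castSucc {M : Type*} [AddCommGroup M] :
    ∀ {k : ℕ} (f : Fin (k + 1) → Fin k → M),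
      (∀ i j, j ≤ i → f i.succ j = -f j.castSucc i) → ∑ i, ∑ j, f i j = 0
  | 0, _, _ => by simp
  | k + 1, f, hf => by
    have ih := sum_sum_eq_zero_of_succ_eq_neg_castSucc (fun i j => f i.castSucc j.castSucc)
      fun i j hij => hf i.castSucc j.castSucc hij
    have hlast : ∑ j, f (Fin.last (k + 1)) j = -∑ i : Fin (k + 1), f i.castSucc (Fin.last k) := by
      rw [← Finset.sum_neg_distrib]
      exact Finset.sum_congr rfl fun j _ => hf (Fin.last k) j (Fin.le_last j)
    calc ∑ i, ∑ j, f i j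
        = ∑ i : Fin (k + 1), ∑ j, f i.castSucc j + ∑ j, f (Fin.last (k + 1)) j :=
          Fin.sum_univ_castSucc _
      _ = ∑ i : Fin (k + 1), ∑ j : Fin k, f i.castSucc j.castSucc := by
          rw [hlast]
          simp only [Fin.sum_univ_castSucc (n := k) (f _), Finset.sum_add_distrib,
            add_neg_cancel_right]
      _ = 0 := ih

section Words

variable {n : ℕ} {F : Finset (Finset (Fin n))} {π : Equiv.Perm (Fin n)}

/-- The number of members of the chain `F` that miss `a`, that is, the index of the block of the
ordered set partition with partial unions `F` that contains `a`. -/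
def blockIndex (F : Finset (Finset (Fin n))) (a : Fin n) : ℕ := #{S ∈ F | a ∉ S}

/-- The positions of the letters in the word of a chain `F`, which lists the blocks of `F` one
after the other, each in increasing order. A word is encoded throughout by this permutation, from
letters to positions. -/
def chainPositions (F : Finset (Finset (Fin n))) : Equiv.Perm (Fin n) :=
  (Tuple.sort (blockIndex F)).symm

/-- The set of the first `t` letters of the word in which `a` has position `π a`. -/
def initialSegment (π : Equiv.Perm (Fin n)) (t : ℕ) : Finset (Fin n) := {a | (π a : ℕ) < t}

/-- The positions `t` at which the word in which `a` has position `π a` has a descent from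
position `t - 1` to position `t`. -/
def descents (π : Equiv.Perm (Fin n)) : Finset ℕ :=
  {t ∈ Finset.range n | ∃ a c, c < a ∧ (π a : ℕ) + 1 = t ∧ (π c : ℕ) = t}

/-- The chain of the initial segments of a word that end at a descent. -/
def descentChain (π : Equiv.Perm (Fin n)) : Finset (Finset (Fin n)) :=
  (descents π).image (initialSegment π)

/-- The face condition of `Δₙ` for a finite set of subsets: the last condition says that `a` and
`c` lie in the two blocks adjacent to `S`. -/
structure IsFacial (F : Finset (Finset (Fin n))) : Prop where
  isChain : IsChain (· ⊆ ·) (F : Set (Finset (Fin n)))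
  exists_descent : ∀ S ∈ F, ∃ a ∈ S, ∃ c ∉ S, c < a ∧ ∀ T ∈ F, a ∈ T → c ∉ T → T = S

theorem IsFacial.subset {G : Finset (Finset (Fin n))} (hF : IsFacial F) (hGF : G ⊆ F) :
    IsFacial G where
  isChain := hF.isChain.mono (Finset.coe_subset.2 hGF)
  exists_descent S hS := by
    obtain ⟨a, ha, c, hc, hca, hsep⟩ := hF.exists_descent S (hGF hS)
    exact ⟨a, ha, c, hc, hca, fun T hT => hsep T (hGF hT)⟩

theorem blockIndex_lt_iff (hF : IsChain (· ⊆ ·) (F : Set (Finset (Fin n)))) {a c : Fin n} :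
    blockIndex F a < blockIndex F c ↔ ∃ S ∈ F, a ∈ S ∧ c ∉ S := by
  constructor
  · intro h
    by_contra! hsep
    exact h.not_ge (card_le_card fun S hS => by
      simp only [mem_filter] at hS ⊢
      exact ⟨hS.1, fun haS => hS.2 (hsep S hS.1 haS)⟩)
  · rintro ⟨S, hS, haS, hcS⟩
    refine card_lt_card ((ssubset_iff_of_subset fun T hT => ?_).2
      ⟨S, by simp [hS, hcS], by simp [haS]⟩)
    simp only [mem_filter] at hT ⊢
    refine ⟨hT.1, fun hcT => ?_⟩
    rcases hF.total hS hT.1 with hST | hTS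
    · exact hT.2 (hST haS)
    · exact hcS (hTS hcT)

theorem chainPositions_lt_iff (F : Finset (Finset (Fin n))) {a b : Fin n} :
    chainPositions F a < chainPositions F b ↔
      blockIndex F a < blockIndex F b ∨ blockIndex F a = blockIndex F b ∧ a < b := by
  have hmono := Tuple.eq_sort_iff'.1 (rfl : Tuple.sort (blockIndex F) = _)
  rw [← hmono.lt_iff_lt, ← Subtype.coe_lt_coe, Prod.Lex.lt_iff]
  simp only [chainPositions, Equiv.trans_apply, Equiv.apply_symm_apply]
  rfl

theorem chainPositions_lt_iff_of_gt (hF : IsChain (· ⊆ ·) (F : Set (Finset (Fin n))))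
    {a c : Fin n} (hca : c < a) :
    chainPositions F a < chainPositions F c ↔ ∃ S ∈ F, a ∈ S ∧ c ∉ S := by
  rw [chainPositions_lt_iff, ← blockIndex_lt_iff hF, or_iff_left fun h => h.2.not_gt hca]

theorem chainPositions_lt_of_mem_of_notMem (hF : IsChain (· ⊆ ·) (F : Set (Finset (Fin n))))
    {S : Finset (Fin n)} (hS : S ∈ F) {a c : Fin n} (ha : a ∈ S) (hc : c ∉ S) :
    chainPositions F a < chainPositions F c :=
  (chainPositions_lt_iff F).2 (Or.inl ((blockIndex_lt_iff hF).2 ⟨S, hS, ha, hc⟩))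

theorem exists_coe_apply_eq (π : Equiv.Perm (Fin n)) {t : ℕ} (ht : t < n) :
    ∃ a, (π a : ℕ) = t :=
  ⟨π.symm ⟨t, ht⟩, by simp⟩

@[simp]
theorem mem_initialSegment {t : ℕ} {a : Fin n} :
    a ∈ initialSegment π t ↔ (π a : ℕ) < t := by
  simp [initialSegment]

theorem card_initialSegment (π : Equiv.Perm (Fin n)) {t : ℕ} (ht : t ≤ n) :
    #(initialSegment π t) = t := by
  have himage : (initialSegment π t).map π.toEmbedding =
      ({p : Fin n | (p : ℕ) < t} : Finset (Fin n)) := by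
    ext p
    simp [mem_map_equiv]
  rw [← card_map π.toEmbedding, himage, Fin.card_filter_val_lt, min_eq_right ht]

theorem initialSegment_mono (π : Equiv.Perm (Fin n)) : Monotone (initialSegment π) :=
  fun _ _ hst _ ha => mem_initialSegment.2 ((mem_initialSegment.1 ha).trans_le hst)

theorem mem_descents {t : ℕ} :
    t ∈ descents π ↔ ∃ a c, c < a ∧ (π a : ℕ) + 1 = t ∧ (π c : ℕ) = t := by
  simp only [descents, mem_filter, mem_range, and_iff_right_iff_imp]
  rintro ⟨a, c, -, -, rfl⟩
  exact (π c).isLt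

theorem mem_descents_iff_lt {a c : Fin n} {t : ℕ}
    (ha : (π a : ℕ) + 1 = t) (hc : (π c : ℕ) = t) : t ∈ descents π ↔ c < a := by
  refine ⟨fun h => ?_, fun h => mem_descents.2 ⟨a, c, h, ha, hc⟩⟩
  obtain ⟨a', c', hlt, ha', hc'⟩ := mem_descents.1 h
  obtain rfl : a' = a := π.injective (Fin.ext (by omega))
  obtain rfl : c' = c := π.injective (Fin.ext (by omega))
  exact hlt

theorem descents_subset_Ioo (π : Equiv.Perm (Fin n)) : descents π ⊆ Finset.Ioo 0 n := by
  intro t ht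
  obtain ⟨a, c, -, hat, rfl⟩ := mem_descents.1 ht
  exact mem_Ioo.2 ⟨by omega, (π c).isLt⟩

theorem lt_of_mem_descents {t : ℕ} (ht : t ∈ descents π) : t < n :=
  (mem_Ioo.1 (descents_subset_Ioo π ht)).2

theorem initialSegment_strictMonoOn_descents (π : Equiv.Perm (Fin n)) :
    StrictMonoOn (initialSegment π) (descents π : Set ℕ) := by
  intro s hs t ht hst
  refine (initialSegment_mono π hst.le).lt_of_ne fun heq => hst.ne ?_
  rw [← card_initialSegment π (lt_of_mem_descents hs).le, heq,
    card_initialSegment π (lt_of_mem_descents ht).le]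

theorem card_descentChain (π : Equiv.Perm (Fin n)) : #(descentChain π) = #(descents π) :=
  card_image_of_injOn (initialSegment_strictMonoOn_descents π).injOn

theorem isFacial_descentChain (π : Equiv.Perm (Fin n)) : IsFacial (descentChain π) where
  isChain := by
    rw [descentChain, Finset.coe_image]
    exact (initialSegment_mono π).isChain_image (isChain_of_trichotomous _)
  exists_descent S hS := by
    obtain ⟨t, ht, rfl⟩ := mem_image.1 hS
    obtain ⟨a, c, hca, hat, hct⟩ := mem_descents.1 ht
    refine ⟨a, mem_initialSegment.2 (by omega), c, by simp [hct], hca, fun T hT haT hcT => ?_⟩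
    obtain ⟨s, -, rfl⟩ := mem_image.1 hT
    rw [mem_initialSegment] at haT hcT
    congr 1
    omega

theorem initialSegment_card_of_forall_lt {S : Finset (Fin n)}
    (h : ∀ a ∈ S, ∀ c ∉ S, π a < π c) : initialSegment π #S = S := by
  refine (eq_of_subset_of_card_le (fun a ha => ?_)
    (card_initialSegment π (card_finset_fin_le S)).le).symm
  have hsub : initialSegment π (π a + 1) ⊆ S := fun b hb => by
    by_contra hbS
    exact (Nat.lt_succ_iff.1 (mem_initialSegment.1 hb)).not_gt (h a ha b hbS)
  rw [mem_initialSegment, ← Nat.succ_le_iff]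
  exact (card_initialSegment π (π a).isLt).symm.le.trans (card_le_card hsub)

theorem initialSegment_chainPositions (hF : IsChain (· ⊆ ·) (F : Set (Finset (Fin n))))
    {S : Finset (Fin n)} (hS : S ∈ F) : initialSegment (chainPositions F) #S = S :=
  initialSegment_card_of_forall_lt fun _ ha _ hc =>
    chainPositions_lt_of_mem_of_notMem hF hS ha hc

theorem card_mem_descents_chainPositions (hF : IsFacial F) {S : Finset (Fin n)}
    (hS : S ∈ F) : #S ∈ descents (chainPositions F) := by
  set π := chainPositions F
  have hmem (b : Fin n) : b ∈ S ↔ (π b : ℕ) < #S := by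
    rw [← mem_initialSegment, initialSegment_chainPositions hF.isChain hS]
  obtain ⟨x, hx, y, hy, hyx, hsep⟩ := hF.exists_descent S hS
  have hxS := (hmem x).1 hx
  have hSy : #S ≤ π y := not_lt.1 ((hmem y).not.1 hy)
  obtain ⟨a, ha⟩ := exists_coe_apply_eq π (t := #S - 1) (by omega)
  obtain ⟨c, hc⟩ := exists_coe_apply_eq π (t := #S) (by omega)
  have haS : a ∈ S := (hmem a).2 (by omega)
  have hcS : c ∉ S := fun h => ((hmem c).1 h).ne hc
  -- an inversion between `x` and `a`, or between `c` and `y`, would need a second member of `F`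
  -- separating `x` from `y`
  have hxa : x ≤ a := by
    by_contra! hax
    have hlt : π x < π a := lt_of_le_of_ne (Fin.le_def.2 (by omega))
      (π.injective.ne hax.ne')
    obtain ⟨T, hT, hxT, haT⟩ := (chainPositions_lt_iff_of_gt hF.isChain hax).1 hlt
    have hTS : T ⊆ S := (hF.isChain.total hT hS).resolve_right fun hST => haT (hST haS)
    exact haT (hsep T hT hxT (fun hyT => hy (hTS hyT)) ▸ haS)
  have hcy : c ≤ y := by
    by_contra! hyc
    have hlt : π c < π y := lt_of_le_of_ne (Fin.le_def.2 (by omega))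
      (π.injective.ne hyc.ne')
    obtain ⟨T, hT, hcT, hyT⟩ := (chainPositions_lt_iff_of_gt hF.isChain hyc).1 hlt
    have hST : S ⊆ T := (hF.isChain.total hS hT).resolve_right fun hTS => hcS (hTS hcT)
    exact hcS (hsep T hT (hST hx) hyT ▸ hcT)
  exact mem_descents.2 ⟨a, c, hcy.trans_lt (hyx.trans_le hxa), by omega, hc⟩

theorem descentChain_chainPositions (hF : IsFacial F) :
    descentChain (chainPositions F) = F := by
  ext S
  simp only [descentChain, mem_image]
  constructor
  · rintro ⟨t, ht, rfl⟩
    obtain ⟨a, c, hca, hat, hct⟩ := mem_descents.1 ht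
    obtain ⟨S, hS, haS, hcS⟩ := (chainPositions_lt_iff_of_gt hF.isChain hca).1
      (Fin.lt_def.2 (by omega))
    have hseg := initialSegment_chainPositions hF.isChain hS
    rw [← hseg, mem_initialSegment] at haS hcS
    rwa [show t = #S by omega, hseg]
  · exact fun hS => ⟨#S, card_mem_descents_chainPositions hF hS,
      initialSegment_chainPositions hF.isChain hS⟩

theorem rel_of_forall_consecutive (r : Fin n → Fin n → Prop) [IsTrans _ r]
    {a c : Fin n} (hac : π a < π c)
    (h : ∀ x y, π a ≤ π x → π y ≤ π c → (π x : ℕ) + 1 = π y → r x y) : r a c := by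
  induction hc : (π c : ℕ) generalizing c with
  | zero => exact absurd hac (by rw [Fin.lt_def]; omega)
  | succ k ih =>
    obtain ⟨d, hd⟩ := exists_coe_apply_eq π (t := k) (by omega)
    have had : π a ≤ π d := Fin.le_def.2 (by omega)
    have hdc : r d c := h d c had le_rfl (by omega)
    rcases had.eq_or_lt with heq | hlt
    · rwa [π.injective heq]
    · exact _root_.trans (ih hlt (fun x y hx hy => h x y hx (hy.trans (Fin.le_def.2 (by omega))))
        hd) hdc

theorem exists_mem_descents_of_gt {a c : Fin n} (hca : c < a)
    (h : π a < π c) : ∃ t ∈ descents π, (π a : ℕ) < t ∧ t ≤ π c := by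
  by_contra! hnone
  refine hca.not_gt (rel_of_forall_consecutive (· < ·) h fun x y hx hy hxy => ?_)
  by_contra! hyx
  have hne : y ≠ x := by rintro rfl; omega
  refine (hnone (π y) ((mem_descents_iff_lt hxy rfl).2 (hyx.lt_of_ne hne)) ?_).not_ge hy
  rw [Fin.le_def] at hx
  omega

theorem exists_notMem_descents_of_lt {a c : Fin n} (hac : a < c)
    (h : π a < π c) : ∃ t ∉ descents π, (π a : ℕ) < t ∧ t ≤ π c := by
  by_contra! hall
  refine hac.not_gt (rel_of_forall_consecutive (· > ·) h fun x y hx hy hxy => ?_)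
  by_contra! hle
  refine (hall (π y) ((mem_descents_iff_lt hxy rfl).not.2 hle.not_gt) ?_).not_ge hy
  rw [Fin.le_def] at hx
  omega

theorem blockIndex_descentChain_lt_iff {a c : Fin n} :
    blockIndex (descentChain π) a < blockIndex (descentChain π) c ↔
      ∃ t ∈ descents π, (π a : ℕ) < t ∧ t ≤ π c := by
  rw [blockIndex_lt_iff (isFacial_descentChain π).isChain]
  simp [descentChain]

theorem chainPositions_descentChain (π : Equiv.Perm (Fin n)) :
    chainPositions (descentChain π) = π := by
  have hsort : π.symm = Tuple.sort (blockIndex (descentChain π)) := by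
    refine Tuple.eq_sort_iff.2 ⟨fun i j hij => ?_, fun i j hij heq => ?_⟩
    · by_contra! hlt
      obtain ⟨t, -, hjt, hti⟩ := blockIndex_descentChain_lt_iff.1 hlt
      simp only [Equiv.apply_symm_apply] at hjt hti
      exact (hjt.trans_le hti).not_ge hij
    · by_contra! hle
      refine heq.not_lt (blockIndex_descentChain_lt_iff.2 (exists_mem_descents_of_gt
        (hle.lt_of_ne (π.symm.injective.ne hij.ne')) ?_))
      simpa using hij
  rw [chainPositions, ← hsort, Equiv.symm_symm]

end Words

theorem toColex_comp_le_toColex_comp {α β γ : Type*} [LinearOrder α] [LinearOrder β] [Finite β]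
    [LinearOrder γ] {f : γ → α} (hf : Monotone f) {π π' : β ≃ γ}
    (h : ∀ a c, c < a → π' a < π' c → π a < π c) : toColex (f ∘ π) ≤ toColex (f ∘ π') := by
  cases nonempty_fintype β
  refine not_lt.1 fun ⟨(a : β), hagree, (ha : f (π' a) < f (π a))⟩ => ?_
  have hcard : #{b | f (π b) ≤ f (π' a)} = #{b | f (π' b) ≤ f (π' a)} :=
    card_equiv (π.trans π'.symm) fun b => by simp
  obtain ⟨b, hb, hb'⟩ : ∃ b, f (π b) ≤ f (π' a) ∧ f (π' a) < f (π' b) := by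
    by_contra! hsub
    exact (card_lt_card ((ssubset_iff_of_subset (monotone_filter_right _ fun b _ => hsub b)).2
      ⟨a, by simp, by simpa using ha⟩)).ne hcard
  rcases lt_trichotomy a b with hab | rfl | hba
  · exact (hb'.trans_eq (hagree b hab)).not_ge hb
  · exact lt_irrefl _ hb'
  · exact (ha.trans_le (hf (h a b hba (hf.reflect_lt hb')).le)).not_ge hb

section CoarsePosition

variable {n : ℕ}

/-- The position of a letter up to exchanging positions `3m` and `3m + 1`: the block `{3m, 3m + 1}`
is contracted to `2m`, and position `3m + 2` becomes `2m + 1`. -/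
def coarsePosition (π : Equiv.Perm (Fin n)) (a : Fin n) : ℕ := 2 * π a / 3

theorem toColex_coarsePosition_le_of_subset {F G : Finset (Finset (Fin n))}
    (hF : IsChain (· ⊆ ·) (F : Set (Finset (Fin n)))) (hGF : G ⊆ F) :
    toColex (coarsePosition (chainPositions F)) ≤ toColex (coarsePosition (chainPositions G)) := by
  have hmono : Monotone fun p : Fin n => 2 * (p : ℕ) / 3 := fun p q hpq =>
    Nat.div_le_div_right (Nat.mul_le_mul_left 2 hpq)
  refine toColex_comp_le_toColex_comp hmono fun a c hca => ?_
  rw [chainPositions_lt_iff_of_gt hF hca,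
    chainPositions_lt_iff_of_gt (hF.mono (coe_subset.2 hGF)) hca]
  exact fun ⟨S, hS, hsep⟩ => ⟨S, hGF hS, hsep⟩

/-- With `κ = coarsePosition π`, the chunk of positions `3m - 1, …, 3m + 2` of the word is active:
exchanging its two middle letters creates or removes a descent at `3m + 1` and changes no other
descent. -/
def IsActive (κ : Fin n → ℕ) (m : ℕ) : Prop :=
  3 * m + 2 ≤ n ∧ ∀ a b, κ b = κ a + 1 → κ a = 2 * m ∨ κ b = 2 * m → b < a

/-- The word `π` with the letters in positions `3m` and `3m + 1` exchanged. -/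
def chunkSwap (π : Equiv.Perm (Fin n)) {m : ℕ} (hm : 3 * m + 2 ≤ n) : Equiv.Perm (Fin n) :=
  π.trans (Equiv.swap ⟨3 * m, by omega⟩ ⟨3 * m + 1, by omega⟩)

variable {π τ : Equiv.Perm (Fin n)} {m t : ℕ}

theorem coe_chunkSwap_apply (hm : 3 * m + 2 ≤ n) (a : Fin n) :
    (chunkSwap π hm a : ℕ) =
      if (π a : ℕ) = 3 * m then 3 * m + 1 else if (π a : ℕ) = 3 * m + 1 then 3 * m else π a := by
  simp only [chunkSwap, Equiv.trans_apply, Equiv.swap_apply_def, Fin.ext_iff]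
  split_ifs <;> rfl

@[simp]
theorem chunkSwap_chunkSwap (hm : 3 * m + 2 ≤ n) : chunkSwap (chunkSwap π hm) hm = π := by
  ext a
  simp [chunkSwap]

@[simp]
theorem coarsePosition_chunkSwap (hm : 3 * m + 2 ≤ n) :
    coarsePosition (chunkSwap π hm) = coarsePosition π := by
  ext a
  simp only [coarsePosition, coe_chunkSwap_apply]
  split_ifs <;> omega

theorem initialSegment_chunkSwap (hm : 3 * m + 2 ≤ n) (ht : t ≠ 3 * m + 1) :
    initialSegment (chunkSwap π hm) t = initialSegment π t := by
  ext a
  simp only [mem_initialSegment, coe_chunkSwap_apply]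
  split_ifs <;> omega

theorem IsActive.mem_descents (hact : IsActive (coarsePosition π) m)
    (ht : t ∈ Ioo 0 n) (htm : t = 3 * m ∨ t = 3 * m + 2) : t ∈ descents π := by
  rw [mem_Ioo] at ht
  obtain ⟨a, ha⟩ := exists_coe_apply_eq π (t := t - 1) (by omega)
  obtain ⟨c, hc⟩ := exists_coe_apply_eq π ht.2
  refine _root_.mem_descents.2 ⟨a, c, hact.2 a c ?_ ?_, by omega, hc⟩ <;>
    simp only [coarsePosition] <;> omega

theorem mem_descents_chunkSwap (hact : IsActive (coarsePosition π) m) (ht : t ≠ 3 * m + 1) :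
    t ∈ descents (chunkSwap π hact.1) ↔ t ∈ descents π := by
  by_cases htm : t = 3 * m ∨ t = 3 * m + 2
  · have hact' : IsActive (coarsePosition (chunkSwap π hact.1)) m := by
      rwa [coarsePosition_chunkSwap]
    exact ⟨fun h => hact.mem_descents (descents_subset_Ioo _ h) htm,
      fun h => hact'.mem_descents (descents_subset_Ioo _ h) htm⟩
  · simp only [mem_descents, coe_chunkSwap_apply]
    refine exists_congr fun a => exists_congr fun c => and_congr_right fun _ => and_congr ?_ ?_ <;>
      split_ifs <;> omega

theorem middle_mem_descents_chunkSwap_iff (hm : 3 * m + 2 ≤ n) :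
    3 * m + 1 ∈ descents (chunkSwap π hm) ↔ 3 * m + 1 ∉ descents π := by
  obtain ⟨a, ha⟩ := exists_coe_apply_eq π (t := 3 * m) (by omega)
  obtain ⟨c, hc⟩ := exists_coe_apply_eq π (t := 3 * m + 1) (by omega)
  have hne : a ≠ c := by rintro rfl; omega
  rw [mem_descents_iff_lt (by rw [ha]) hc, mem_descents_iff_lt (a := c) (c := a), not_lt,
    hne.le_iff_lt] <;> simp [coe_chunkSwap_apply, ha, hc]

theorem descents_chunkSwap (hact : IsActive (coarsePosition π) m)
    (hmid : 3 * m + 1 ∉ descents π) :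
    descents (chunkSwap π hact.1) = insert (3 * m + 1) (descents π) := by
  ext t
  rw [mem_insert]
  rcases eq_or_ne t (3 * m + 1) with rfl | ht
  · simp [middle_mem_descents_chunkSwap_iff, hmid]
  · simp [mem_descents_chunkSwap hact ht, ht]

theorem descentChain_subset_descentChain_chunkSwap (hact : IsActive (coarsePosition π) m)
    (hmid : 3 * m + 1 ∉ descents π) :
    descentChain π ⊆ descentChain (chunkSwap π hact.1) := by
  intro S hS
  obtain ⟨t, ht, rfl⟩ := mem_image.1 hS
  rw [← initialSegment_chunkSwap hact.1 (ne_of_mem_of_not_mem ht hmid)]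
  exact mem_image_of_mem _ (by simp [descents_chunkSwap hact hmid, ht])

theorem initialSegment_middle_eq_of_coarsePosition_eq (hπτ : coarsePosition π = coarsePosition τ)
    (hπ : 3 * m + 1 ∈ descents π) (hτ : 3 * m + 1 ∈ descents τ) :
    initialSegment π (3 * m + 1) = initialSegment τ (3 * m + 1) := by
  obtain ⟨a, c, hca, ha, hc⟩ := mem_descents.1 hπ
  obtain ⟨a', c', hca', ha', hc'⟩ := mem_descents.1 hτ
  have hcoarse (b : Fin n) : 2 * (π b : ℕ) / 3 = 2 * τ b / 3 := congrFun hπτ b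
  have hblock (b : Fin n) (hb : (τ b : ℕ) = 3 * m ∨ (τ b : ℕ) = 3 * m + 1) : b = a ∨ b = c := by
    have hb' := hcoarse b
    rw [← π.apply_eq_iff_eq, ← π.apply_eq_iff_eq (x := b) (y := c), Fin.ext_iff, Fin.ext_iff]
    omega
  obtain rfl : a' = a := by
    rcases hblock a' (by omega), hblock c' (by omega) with ⟨rfl | rfl, rfl | rfl⟩
    · rfl
    · rfl
    · exact absurd hca' hca.not_gt
    · exact absurd hca' (lt_irrefl _)
  ext b
  rw [mem_initialSegment, mem_initialSegment]
  rcases eq_or_ne b a' with rfl | hb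
  · omega
  · have hπb := Fin.val_ne_of_ne (π.injective.ne hb)
    have hτb := Fin.val_ne_of_ne (τ.injective.ne hb)
    have hb' := hcoarse b
    omega

/-- The index of the first active chunk of a word with coarse positions `κ`; its value when no chunk
is active is irrelevant. -/
noncomputable def firstActive (κ : Fin n → ℕ) : ℕ := sInf {m | IsActive κ m}

/-- A word is an upper word if it has a descent in the middle of its first active chunk. Removing
this descent matches the upper words with the other words that have an active chunk. -/
def IsUpper (π : Equiv.Perm (Fin n)) : Prop :=
  3 * firstActive (coarsePosition π) + 1 ∈ descents π

theorem isActive_firstActive (hn : 0 < n) (h : 2 * n < 3 * #(descents π) + 2) :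
    IsActive (coarsePosition π) (firstActive (coarsePosition π)) := by
  refine Nat.sInf_mem (s := {m | IsActive (coarsePosition π) m}) ?_
  by_contra hempty
  have hinactive (m : ℕ) : ¬IsActive (coarsePosition π) m := fun hm => hempty ⟨m, hm⟩
  have hcover : range ((n + 1) / 3) ⊆ (Ioo 0 n \ descents π).image (· / 3) := by
    intro m hm
    rw [mem_range] at hm
    have hm' := hinactive m
    simp only [IsActive, not_and, not_forall, not_lt] at hm'
    obtain ⟨a, b, hκ, hm2, hle⟩ := hm' (by omega)
    unfold coarsePosition at hκ hm2
    obtain ⟨t, ht, hat, htb⟩ := exists_notMem_descents_of_lt (π := π)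
      (hle.lt_of_ne (by rintro rfl; omega)) (Fin.lt_def.2 (by omega))
    exact mem_image.2 ⟨t, mem_sdiff.2 ⟨mem_Ioo.2 ⟨by omega, by omega⟩, ht⟩, by omega⟩
  have hdescents := card_le_card (descents_subset_Ioo π)
  have hcard := (card_le_card hcover).trans card_image_le
  rw [card_sdiff_of_subset (descents_subset_Ioo π), card_range, Nat.card_Ioo] at hcard
  rw [Nat.card_Ioo] at hdescents
  omega

end CoarsePosition

theorem mem_sdiff_getElem_iff_forall_separating {α : Type*} [DecidableEq α]
    {W : List (Finset α)} (hW : W.SortedLT)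
    {i : ℕ} (hi : i + 2 < W.length) {a c : α} :
    a ∈ W[i + 1] \ W[i] ∧ c ∈ W[i + 2] \ W[i + 1] ↔
      a ∈ W[i + 1] ∧ c ∉ W[i + 1] ∧ ∀ T ∈ W, a ∈ T → c ∉ T → T = W[i + 1] := by
  simp only [mem_sdiff]
  constructor
  · rintro ⟨⟨ha, ha'⟩, hc, hc'⟩
    refine ⟨ha, hc', fun T hT haT hcT => ?_⟩
    obtain ⟨k, hk, rfl⟩ := List.getElem_of_mem hT
    rcases lt_trichotomy k (i + 1) with hki | rfl | hki
    · exact absurd (hW.sortedLE.getElem_le_getElem_of_le (by omega) haT) ha'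
    · rfl
    · exact absurd (hW.sortedLE.getElem_le_getElem_of_le (by omega) hc) hcT
  · rintro ⟨ha, hc, hsep⟩
    have hlt : W[i] < W[i + 1] := hW.getElem_lt_getElem_of_lt (by omega)
    have hlt' : W[i + 1] < W[i + 2] := hW.getElem_lt_getElem_of_lt (by omega)
    refine ⟨⟨ha, fun ha' => ?_⟩, ?_, hc⟩
    · exact hlt.ne (hsep _ (List.getElem_mem _) ha' fun h => hc (hlt.le h))
    · by_contra hc'
      exact hlt'.ne' (hsep _ (List.getElem_mem _) (hlt'.le ha) hc')

theorem eraseIdx_succ_eraseIdx {α : Type*} (l : List α) {i j : ℕ} (hji : j ≤ i) :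
    (l.eraseIdx (i + 1)).eraseIdx j = (l.eraseIdx j).eraseIdx i := by
  induction l generalizing i j with
  | nil => rfl
  | cons x l ih =>
    cases j with
    | zero => rfl
    | succ j =>
      obtain ⟨i, rfl⟩ := Nat.exists_eq_add_one.2 (j.succ_pos.trans_le hji)
      exact congrArg (x :: ·) (ih (Nat.le_of_succ_le_succ hji))

section Faces

variable {n : ℕ} {L : List (Finset (Fin n))}

theorem sortedLT_withSent_iff :
    (withSent n L).SortedLT ↔ 0 < n ∧ L.SortedLT ∧ ∀ S ∈ L, S.Nonempty ∧ S ≠ univ := by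
  simp only [List.sortedLT_iff_pairwise, withSent, List.cons_append, List.pairwise_cons,
    List.pairwise_append, List.Pairwise.nil, List.mem_append, List.mem_singleton, List.not_mem_nil,
    or_imp, forall_and, forall_eq, empty_ssubset, ssubset_univ_iff, univ_nonempty_iff,
    ← Fin.pos_iff_nonempty]
  tauto

theorem forall_exists_descent_withSent_iff (hW : (withSent n L).SortedLT) :
    (∀ i, ∀ h : i + 2 < (withSent n L).length,
      ∃ a ∈ (withSent n L)[i + 1] \ (withSent n L)[i],
        ∃ c ∈ (withSent n L)[i + 2] \ (withSent n L)[i + 1], c < a) ↔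
      ∀ S ∈ L, ∃ a ∈ S, ∃ c ∉ S, c < a ∧ ∀ T ∈ L, a ∈ T → c ∉ T → T = S := by
  have hlength : (withSent n L).length = L.length + 2 := by simp [withSent]
  have hmem {a c : Fin n} {S : Finset (Fin n)} : (∀ T ∈ withSent n L, a ∈ T → c ∉ T → T = S) ↔
      ∀ T ∈ L, a ∈ T → c ∉ T → T = S := by
    simp [withSent, or_imp, forall_and]
  have hget (i : ℕ) (hi : i + 2 < (withSent n L).length) :
      (withSent n L)[i + 1] = L[i]'(by omega) := by
    simp [withSent, show i < L.length by omega]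
  have hiff (i : ℕ) (hi : i + 2 < (withSent n L).length) :
      (∃ a ∈ (withSent n L)[i + 1] \ (withSent n L)[i],
        ∃ c ∈ (withSent n L)[i + 2] \ (withSent n L)[i + 1], c < a) ↔
      ∃ a ∈ L[i]'(by omega), ∃ c ∉ L[i]'(by omega),
        c < a ∧ ∀ T ∈ L, a ∈ T → c ∉ T → T = L[i]'(by omega) := by
    have hsep (a c : Fin n) := mem_sdiff_getElem_iff_forall_separating hW hi (a := a) (c := c)
    simp only [hmem, hget i hi] at hsep ⊢
    grind
  rw [List.forall_mem_iff_forall_getElem]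
  exact ⟨fun h i hi => (hiff i (by omega)).1 (h i (by omega)),
    fun h i hi => (hiff i hi).2 (h i (by omega))⟩

theorem isFace_iff : IsFace n L ↔ 0 < n ∧ L.SortedLT ∧ IsFacial L.toFinset := by
  have hface : IsFace n L ↔ (withSent n L).SortedLT ∧
      ∀ S ∈ L, ∃ a ∈ S, ∃ c ∉ S, c < a ∧ ∀ T ∈ L, a ∈ T → c ∉ T → T = S := by
    rw [← and_congr_right forall_exists_descent_withSent_iff]
    exact and_congr_left' List.sortedLT_iff_isChain.symm
  rw [hface, sortedLT_withSent_iff, and_assoc, and_assoc]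
  refine and_congr_right fun _ => and_congr_right fun hL => ⟨fun ⟨_, h⟩ => ⟨?_, by simpa using h⟩,
    fun hF => ⟨fun S hS => ?_, by simpa using hF.exists_descent⟩⟩
  · rw [List.coe_toFinset, ← Set.range_list_get]
    exact hL.sortedLE.monotone_get.isChain_range
  · obtain ⟨a, ha, c, hc, -⟩ := hF.exists_descent S (List.mem_toFinset.2 hS)
    exact ⟨⟨a, ha⟩, fun h => hc (h ▸ mem_univ c)⟩

namespace HFace

variable {k : ℕ}

/-- The members of a face, as an unordered set. -/
def chain (L : HFace n k) : Finset (Finset (Fin n)) := L.1.toFinset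

theorem isFacial_chain (L : HFace n k) : IsFacial L.chain := (isFace_iff.1 L.2.1).2.2

theorem pos (L : HFace n k) : 0 < n := (isFace_iff.1 L.2.1).1

theorem sortedLT (L : HFace n k) : L.1.SortedLT := (isFace_iff.1 L.2.1).2.1

theorem card_chain (L : HFace n k) : #L.chain = k :=
  (List.toFinset_card_of_nodup L.sortedLT.nodup).trans L.2.2

theorem chain_injective : Function.Injective (chain : HFace n k → Finset (Finset (Fin n))) :=
  fun L M h => Subtype.ext (L.sortedLT.eq_of_mem_iff M.sortedLT fun S => by
    rw [← List.mem_toFinset, ← List.mem_toFinset]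
    exact Finset.ext_iff.1 h S)

instance : Finite (HFace n k) := Finite.of_injective _ chain_injective

/-- The word of a face. -/
def word (L : HFace n k) : Equiv.Perm (Fin n) := chainPositions L.chain

theorem descentChain_word (L : HFace n k) : descentChain L.word = L.chain :=
  descentChain_chainPositions L.isFacial_chain

theorem toColex_coarsePosition_word_le {l : ℕ} {E : HFace n k} {L : HFace n l}
    (h : E.chain ⊆ L.chain) :
    toColex (coarsePosition L.word) ≤ toColex (coarsePosition E.word) :=
  toColex_coarsePosition_le_of_subset L.isFacial_chain.isChain h

theorem card_descents_word (L : HFace n k) : #(descents L.word) = k := by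
  rw [← card_descentChain, descentChain_word, card_chain]

theorem exists_word_eq (hn : 0 < n) {π : Equiv.Perm (Fin n)} (hk : #(descents π) = k) :
    ∃ L : HFace n k, L.word = π := by
  let L := (descents π).sort.map (initialSegment π)
  have hL : L.toFinset = descentChain π := by
    ext S
    simp [L, descentChain]
  refine ⟨⟨L, isFace_iff.2 ⟨hn, ?_, ?_⟩, ?_⟩,
    (congrArg chainPositions hL).trans (chainPositions_descentChain π)⟩
  · rw [List.sortedLT_iff_pairwise, List.pairwise_map]
    refine (sortedLT_sort _).pairwise.imp_of_mem fun hs ht hst => ?_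
    exact initialSegment_strictMonoOn_descents π (by simpa using hs) (by simpa using ht) hst
  · rw [hL]
    exact isFacial_descentChain π
  · rw [List.length_map, length_sort, hk]

/-- The face obtained from `L` by deleting its `j`-th member. -/
def facet (L : HFace n (k + 1)) (j : Fin (k + 1)) : HFace n k :=
  ⟨L.1.eraseIdx j, isFace_iff.2 ⟨L.pos,
    (L.sortedLT.pairwise.sublist (List.eraseIdx_sublist _ _)).sortedLT,
    L.isFacial_chain.subset fun S hS => List.mem_toFinset.2
      (List.mem_of_mem_eraseIdx (List.mem_toFinset.1 hS))⟩, by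
    rw [List.length_eraseIdx_of_lt (by rw [L.2.2]; exact j.isLt), L.2.2, Nat.add_sub_cancel]⟩

theorem chain_facet (L : HFace n (k + 1)) (j : Fin (k + 1)) :
    (L.facet j).chain = L.chain.erase (L.1[j]'(by rw [L.2.2]; exact j.isLt)) := by
  have hj : (j : ℕ) < L.1.length := by rw [L.2.2]; exact j.isLt
  calc (L.1.eraseIdx j).toFinset = (L.1.erase L.1[j]).toFinset :=
        congrArg List.toFinset (L.sortedLT.nodup.erase_getElem j hj).symm
    _ = L.chain.erase L.1[j] := by
        ext S
        rw [List.mem_toFinset, L.sortedLT.nodup.mem_erase_iff, mem_erase, chain, List.mem_toFinset]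

theorem facet_injective (L : HFace n (k + 1)) : Function.Injective L.facet := by
  intro i j hij
  have hchain : (L.facet i).chain = (L.facet j).chain := by rw [hij]
  rw [chain_facet, chain_facet, erase_inj _ (by simp [chain])] at hchain
  exact Fin.ext ((L.sortedLT.nodup.getElem_inj_iff).1 hchain)

theorem exists_facet_eq_iff (L : HFace n (k + 1)) (M : HFace n k) :
    (∃ j, L.facet j = M) ↔ M.chain ⊆ L.chain := by
  constructor
  · rintro ⟨j, rfl⟩
    rw [chain_facet]
    exact erase_subset _ _
  · intro h
    obtain ⟨S, hS, hSM⟩ := exists_mem_notMem_of_card_lt_card (s := M.chain) (t := L.chain)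
      (by rw [card_chain, card_chain]; exact k.lt_succ_self)
    obtain ⟨j, hj, rfl⟩ := List.getElem_of_mem (List.mem_toFinset.1 hS)
    refine ⟨⟨j, by rwa [L.2.2] at hj⟩, chain_injective (eq_of_subset_of_card_le ?_ ?_).symm⟩
    · rw [chain_facet]
      exact subset_erase.2 ⟨h, hSM⟩
    · rw [card_chain, card_chain]

theorem facet_facet (L : HFace n (k + 2)) {i j : Fin (k + 1)} (hji : j ≤ i) :
    (L.facet i.succ).facet j = (L.facet j.castSucc).facet i :=
  Subtype.ext (eraseIdx_succ_eraseIdx L.1 hji)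

end HFace

variable {k : ℕ}

theorem bdryElem_eq (L : HFace n (k + 1)) :
    bdryElem n k L = ∑ j, Finsupp.single (L.facet j) ((-1 : ℤ) ^ (j : ℕ)) :=
  sum_congr rfl fun j _ => dif_pos (L.facet j).2

theorem bdry_single (L : HFace n (k + 1)) (z : ℤ) :
    bdry n k (Finsupp.single L z) =
      ∑ j, Finsupp.single (L.facet j) (z * (-1 : ℤ) ^ (j : ℕ)) := by
  simp [bdry, bdryElem_eq, smul_sum]

theorem isUnit_bdry_single_apply {L : HFace n (k + 1)} {M : HFace n k} (h : M.chain ⊆ L.chain) :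
    IsUnit (bdry n k (Finsupp.single L 1) M) := by
  classical
  obtain ⟨j, rfl⟩ := (L.exists_facet_eq_iff M).2 h
  have hcoeff : bdry n k (Finsupp.single L 1) (L.facet j) = (-1) ^ (j : ℕ) := by
    simp [bdry_single, Finsupp.finsetSum_apply, Finsupp.single_apply, L.facet_injective.eq_iff]
  rw [hcoeff]
  exact isUnit_one.neg.pow _

theorem chain_subset_of_bdry_single_apply_ne_zero {L : HFace n (k + 1)} {M : HFace n k}
    (h : bdry n k (Finsupp.single L 1) M ≠ 0) : M.chain ⊆ L.chain := by
  rw [bdry_single, Finsupp.finsetSum_apply] at h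
  obtain ⟨j, -, hj⟩ := exists_ne_zero_of_sum_ne_zero h
  exact (L.exists_facet_eq_iff M).1 ⟨j, (Finsupp.single_apply_ne_zero.1 hj).1.symm⟩

theorem bdry_comp_bdry : bdry n k ∘ₗ bdry n (k + 1) = 0 := by
  ext L : 2
  simp only [LinearMap.comp_apply, Finsupp.lsingle_apply, bdry_single, map_sum, one_mul,
    LinearMap.zero_apply, LinearMap.zero_comp]
  refine sum_sum_eq_zero_of_succ_eq_neg_castSucc _ fun i j hji => ?_
  rw [L.facet_facet hji, ← Finsupp.single_neg]
  congr 1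
  simp only [Fin.val_succ, Fin.val_castSucc]
  ring

/-- The matching of faces: `E` arises from `L` by removing the descent in the middle of the first
active chunk. This is encoded by the properties that single out `E` among the facets of `L`; see
`IsMatched.chain_eq_erase` for the explicit form. -/
structure IsMatched {k : ℕ} (E : HFace n k) (L : HFace n (k + 1)) : Prop where
  chain_subset : E.chain ⊆ L.chain
  coarsePosition_eq : coarsePosition E.word = coarsePosition L.word
  not_isUpper : ¬IsUpper E.word
  isUpper : IsUpper L.word

namespace IsMatched

variable {k : ℕ} {E E' : HFace n k} {L L' : HFace n (k + 1)}

theorem chain_eq_erase (h : IsMatched E L) :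
    ∃ B ∈ L.chain, B = initialSegment L.word (3 * firstActive (coarsePosition L.word) + 1) ∧
      E.chain = L.chain.erase B := by
  set t := 3 * firstActive (coarsePosition L.word) + 1
  have htL : t ∈ descents L.word := h.isUpper
  have hBL : initialSegment L.word t ∈ L.chain := by
    rw [← L.descentChain_word]
    exact mem_image_of_mem _ htL
  have htE : t ∉ descents E.word := by
    have hE := h.not_isUpper
    rwa [IsUpper, h.coarsePosition_eq] at hE
  have hBE : initialSegment L.word t ∉ E.chain := by
    intro hB
    have hcard := card_mem_descents_chainPositions E.isFacial_chain hB
    rw [card_initialSegment L.word (lt_of_mem_descents htL).le] at hcard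
    exact htE hcard
  refine ⟨_, hBL, rfl, eq_of_subset_of_card_le (subset_erase.2 ⟨h.chain_subset, hBE⟩) ?_⟩
  rw [card_erase_of_mem hBL, L.card_chain, E.card_chain, Nat.add_sub_cancel]

theorem left_unique (h : IsMatched E L) (h' : IsMatched E' L) : E = E' := by
  obtain ⟨_, _, rfl, hE⟩ := h.chain_eq_erase
  obtain ⟨_, _, rfl, hE'⟩ := h'.chain_eq_erase
  exact HFace.chain_injective (hE.trans hE'.symm)

theorem right_unique (h : IsMatched E L) (h' : IsMatched E L') : L = L' := by
  have hκ : coarsePosition L.word = coarsePosition L'.word :=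
    h.coarsePosition_eq.symm.trans h'.coarsePosition_eq
  have hupper' := h'.isUpper
  rw [IsUpper, ← hκ] at hupper'
  obtain ⟨B, hB, hBL, hE⟩ := h.chain_eq_erase
  obtain ⟨B', hB', hBL', hE'⟩ := h'.chain_eq_erase
  obtain rfl : B = B' := by
    rw [hBL, hBL', ← hκ, initialSegment_middle_eq_of_coarsePosition_eq hκ h.isUpper hupper']
  refine HFace.chain_injective ?_
  rw [← insert_erase hB, ← insert_erase hB', ← hE, ← hE']

end IsMatched

theorem HFace.exists_isMatched_of_not_isUpper {k : ℕ} {E : HFace n k} (hk : 2 * n < 3 * k + 2)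
    (hE : ¬IsUpper E.word) : ∃ L, IsMatched E L := by
  have hact := isActive_firstActive E.pos (by rwa [E.card_descents_word])
  obtain ⟨L, hL⟩ := exists_word_eq (k := k + 1) E.pos (π := chunkSwap E.word hact.1)
    (by rw [descents_chunkSwap hact hE, card_insert_of_notMem hE, E.card_descents_word])
  refine ⟨L, ?_, ?_, hE, ?_⟩
  · rw [← E.descentChain_word, ← L.descentChain_word, hL]
    exact descentChain_subset_descentChain_chunkSwap hact hE
  · rw [hL, coarsePosition_chunkSwap]
  · rw [hL, IsUpper, coarsePosition_chunkSwap, middle_mem_descents_chunkSwap_iff]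
    exact hE

theorem HFace.exists_isMatched_of_isUpper {k : ℕ} {L : HFace n (k + 1)} (hk : 2 * n < 3 * k + 5)
    (hL : IsUpper L.word) : ∃ E, IsMatched E L := by
  have hact := isActive_firstActive L.pos (by rw [L.card_descents_word]; omega)
  set m := firstActive (coarsePosition L.word)
  set π := chunkSwap L.word hact.1 with hπ
  have hactπ : IsActive (coarsePosition π) m := by rwa [hπ, coarsePosition_chunkSwap]
  have hπL : chunkSwap π hactπ.1 = L.word := chunkSwap_chunkSwap hact.1
  have hmid : 3 * m + 1 ∉ descents π := by
    rw [hπ, middle_mem_descents_chunkSwap_iff, not_not]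
    exact hL
  obtain ⟨E, hE⟩ := exists_word_eq (k := k) L.pos (π := π) (by
    have hcard := L.card_descents_word
    rwa [← hπL, descents_chunkSwap hactπ hmid, card_insert_of_notMem hmid, Nat.succ_inj] at hcard)
  refine ⟨E, ?_, ?_, ?_, hL⟩
  · rw [← E.descentChain_word, ← L.descentChain_word, hE, ← hπL]
    exact descentChain_subset_descentChain_chunkSwap hactπ hmid
  · rw [hE, hπ, coarsePosition_chunkSwap]
  · rwa [hE, IsUpper, hπ, coarsePosition_chunkSwap]

theorem ker_bdry_le_range_bdry {k : ℕ} (h : 2 * n < 3 * k + 5) :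
    LinearMap.ker (bdry n k) ≤ LinearMap.range (bdry n (k + 1)) := by
  let φ (L : HFace n (k + 1)) : Colex (Fin n → ℕ) := toColex (coarsePosition L.word)
  refine ker_le_range_of_acyclic_matching _ _ bdry_comp_bdry φ {L | IsUpper L.word}
    (fun L hL => ?_) fun L hL => ?_
  · obtain ⟨M, hLM⟩ := HFace.exists_isMatched_of_not_isUpper h hL
    refine ⟨M, isUnit_bdry_single_apply hLM.chain_subset, fun L' hne hL' => ?_⟩
    have hL'M := chain_subset_of_bdry_single_apply_ne_zero hL'
    refine or_iff_not_imp_left.2 fun hupper => ?_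
    have hle : φ L ≤ φ L' := by
      simpa only [φ, hLM.coarsePosition_eq] using HFace.toColex_coarsePosition_word_le hL'M
    refine hle.lt_of_ne fun heq => hne (IsMatched.left_unique ?_ hLM)
    exact ⟨hL'M, heq.symm.trans hLM.coarsePosition_eq, hupper, hLM.isUpper⟩
  · obtain ⟨E, hEL⟩ := HFace.exists_isMatched_of_isUpper h hL
    refine ⟨E, isUnit_bdry_single_apply hEL.chain_subset, fun L' hL'upper hne hL' => ?_⟩
    have hEL' := chain_subset_of_bdry_single_apply_ne_zero hL'
    have hle : φ L' ≤ φ L := by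
      simpa only [φ, hEL.coarsePosition_eq] using HFace.toColex_coarsePosition_word_le hEL'
    refine hle.lt_of_ne fun heq => hne (IsMatched.right_unique ?_ hEL)
    exact ⟨hEL', hEL.coarsePosition_eq.trans heq.symm, hEL.not_isUpper, hL'upper⟩

end Faces

/-- the reduced homology `H̃ᵢ(Δₙ; ℤ)` vanishes in every dimension
`i > (2n-5)/3`, i.e. whenever `2n < 3i + 5`. -/
theorem high_dimensional_homology_vanishes (n i : ℕ) (h : 2 * n < 3 * i + 5) :
    Subsingleton (ReducedHomology n i) := by
  unfold ReducedHomology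
  rw [Submodule.Quotient.subsingleton_iff, Submodule.comap_subtype_eq_top]
  exact ker_bdry_le_range_bdry h
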